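/- Let R be a Banach–Tate ring whose underlying ring is Noetherian, with norm |·| and multiplicative pseudo-uniformizer ϖ, admitting a continuous ring homomorphism ι : Z_p → R. Set ε = 1 if p is odd and ε = 2 if p = 2, and fix d ≥ 1. Let κ : (Z_p^×)^d → R^× be a continuous group homomorphism. Then there exist a real number s > 0, constants C₁, C₂ > 0 and a norm |·|′ on R such that: (i) C₁·|x|^s ≤ |x|′ ≤ C₂·|x|^s for all x ∈ R; (ii) |ι(z)|′ ≤ |z|_p for all z ∈ Z_p, where |·|_p is the p-adic absolute value normalized by |p|_p = p⁻¹; (iii) |κ(t)|′ ≤ 1 for all t ∈ (Z_p^×)^d; (iv) |κ(t) − 1|′ < 1 for all t ∈ (1 + p^ε·Z_p)^d; and (v) ϖ is a multiplicative pseudo-uniformizer for |·|′. -/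

import Mathlib

/-!
The norm is obtained from `ν` by finitely many changes to an equivalent norm, followed by a power.

The basic construction (`exists_refinement`): let `m : J →* R` be a family of elements with a
submultiplicative weight `w` such that `ν (m j) ≤ C * w j`. Then
`N x = ⨆ j, ν (x * m j) / w j` satisfies `ν ≤ N ≤ C * ν` and `N (m j * x) ≤ w j * N x`, and the
operator norm of multiplication by `x` on `(R, N)` is a ring norm `ν'` with `ν' ≤ ν ≤ C * ν'` and
`ν' (m j) ≤ w j`; multiplicativity of `ϖ` survives.

* With `J = (ℤ_p^×)^d` and `w = 1` this yields a norm in which all `κ t` have norm at most `1`;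
  the bound on `ν ∘ κ` comes from continuity at `1` and the finiteness of `(ℤ/p^k)^d`.
* With `J` the powers of a single `x` having some `ν (x ^ n) < 1`, it yields a norm in which `x`
  has norm less than `1` (`exists_refinement_of_pow`). This is applied to `p`, and then to
  `κ t - 1` for the finitely many representatives `t` of `(1 + pℤ_p)^d` modulo a neighbourhood `U`
  of `1` on which `ν (κ u - 1) < 1`. These elements are topologically nilpotent because
  `(κ t - 1) ^ p ^ n ≡ κ (t ^ p ^ n) - 1` modulo `p` and `t ^ p ^ n` tends to `1`.

Since norms only decrease in this process, bounds achieved earlier, and the bound on `U`, persist;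
writing `t = u * t₀` with `u ∈ U` gives the bound for all `t`. A large power `s` then makes the norm
of `p` at most `p⁻¹`.

A norm here is not assumed symmetric; `ν (-1) ≤ 1` follows from the continuity of `ι`, which
gives `ν (ι z) ≤ 1` for all `z`.
-/

/-- A (nonarchimedean, submultiplicative) norm on a commutative ring. -/
def IsRingNorm {R : Type*} [CommRing R] (ν : R → ℝ) : Prop :=
  (∀ x, 0 ≤ ν x) ∧ ν 0 = 0 ∧ ν 1 = 1 ∧ (∀ x, ν x = 0 → x = 0) ∧
  (∀ x y, ν (x + y) ≤ max (ν x) (ν y)) ∧ (∀ x y, ν (x * y) ≤ ν x * ν y)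

/-- Completeness of `R` with respect to the norm `ν`. -/
def NormComplete {R : Type*} [CommRing R] (ν : R → ℝ) : Prop :=
  ∀ u : ℕ → R, (∀ ε : ℝ, 0 < ε → ∃ N : ℕ, ∀ m n : ℕ, N ≤ m → N ≤ n → ν (u m - u n) < ε) →
    ∃ x : R, ∀ ε : ℝ, 0 < ε → ∃ N : ℕ, ∀ n : ℕ, N ≤ n → ν (u n - x) < ε

/-- `ϖ` is a multiplicative pseudo-uniformizer for the norm `ν`. -/
def IsMultPseudoUniformizer {R : Type*} [CommRing R] (ν : R → ℝ) (ϖ : R) : Prop :=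
  IsUnit ϖ ∧ ν ϖ < 1 ∧ ∀ x, ν (ϖ * x) = ν ϖ * ν x

/-- `ν'` is a ring norm equivalent to `ν` and bounded by it, for which `ϖ` is still a
multiplicative pseudo-uniformizer. -/
def Refines {R : Type*} [CommRing R] (ϖ : R) (ν ν' : R → ℝ) : Prop :=
  IsRingNorm ν' ∧ IsMultPseudoUniformizer ν' ϖ ∧ (∀ x, ν' x ≤ ν x) ∧
    ∃ C : ℝ, 0 < C ∧ ∀ x, ν x ≤ C * ν' x

lemma Refines.trans {R : Type*} [CommRing R] {ϖ : R} {ν₁ ν₂ ν₃ : R → ℝ}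
    (h : Refines ϖ ν₁ ν₂) (h' : Refines ϖ ν₂ ν₃) : Refines ϖ ν₁ ν₃ := by
  obtain ⟨-, -, hle, C, hC, hC'⟩ := h
  obtain ⟨h1, h2, hle', D, hD, hD'⟩ := h'
  refine ⟨h1, h2, fun x => (hle' x).trans (hle x), C * D, by positivity, fun x => ?_⟩
  calc ν₁ x ≤ C * ν₂ x := hC' x
    _ ≤ C * (D * ν₃ x) := by gcongr; exact hD' x
    _ = C * D * ν₃ x := by ring

/-- A family `m` bounded by a multiple of a submultiplicative weight `w` is bounded by `w` itself
after passing to an equivalent norm. -/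
lemma exists_refinement {R : Type*} [CommRing R] {ν : R → ℝ} (hν : IsRingNorm ν)
    {ϖ : R} (hϖ : IsMultPseudoUniformizer ν ϖ) {J : Type*} [CommMonoid J] (m : J →* R)
    (w : J → ℝ) (hw : ∀ j, 0 < w j) (hw1 : w 1 = 1) (hwm : ∀ i j, w (i * j) ≤ w i * w j)
    (C : ℝ) (hC : ∀ j, ν (m j) ≤ C * w j) :
    ∃ ν' : R → ℝ, Refines ϖ ν ν' ∧ ∀ j, ν' (m j) ≤ w j := by
  obtain ⟨h0, hz, h1, hd, hadd, hmul⟩ := hν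
  obtain ⟨hu, hlt, hϖm⟩ := hϖ
  have hϖ0 : 0 < ν ϖ := by
    obtain ⟨y, hy⟩ := hu.exists_right_inv
    have := hϖm y
    rw [hy, h1] at this
    rcases (h0 ϖ).eq_or_lt with h | h
    · rw [← h] at this; simp at this
    · exact h
  have hC0 : 0 < C := by
    have := hC 1
    rw [map_one, h1, hw1] at this
    linarith
  set N : R → ℝ := fun x => ⨆ j, ν (x * m j) / w j with hN
  have hbd : ∀ x j, ν (x * m j) / w j ≤ C * ν x := fun x j => by
    rw [div_le_iff₀ (hw j)]
    calc _ ≤ ν x * ν (m j) := hmul _ _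
      _ ≤ ν x * (C * w j) := by gcongr; exacts [h0 x, hC j]
      _ = _ := by ring
  have hNle : ∀ x j, ν (x * m j) / w j ≤ N x := fun x j =>
    le_ciSup (f := fun j => ν (x * m j) / w j) ⟨C * ν x, by rintro _ ⟨j, rfl⟩; exact hbd x j⟩ j
  have hNle' : ∀ x j, ν (x * m j) ≤ N x * w j := fun x j => (div_le_iff₀ (hw j)).1 (hNle x j)
  have hNub : ∀ x c, (∀ j, ν (x * m j) ≤ c * w j) → N x ≤ c := fun x c h =>
    ciSup_le fun j => (div_le_iff₀ (hw j)).2 (h j)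
  have hNC : ∀ x, N x ≤ C * ν x := fun x => ciSup_le (hbd x)
  have hνN : ∀ x, ν x ≤ N x := fun x => by simpa [hw1] using hNle x 1
  have hN0 : ∀ x, 0 ≤ N x := fun x => (h0 x).trans (hνN x)
  have hNz : N 0 = 0 := le_antisymm (by simpa [hz] using hNC 0) (hN0 0)
  have hNpos : ∀ x, x ≠ 0 → 0 < N x := fun x hx =>
    lt_of_lt_of_le ((h0 x).lt_of_ne fun h => hx (hd x h.symm)) (hνN x)
  have hNadd : ∀ x y, N (x + y) ≤ max (N x) (N y) := fun x y => hNub _ _ fun j => by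
    rw [add_mul, max_mul_of_nonneg _ _ (hw j).le]
    exact (hadd _ _).trans (max_le_max (hNle' x j) (hNle' y j))
  have hNϖ : ∀ x, N (ϖ * x) = ν ϖ * N x := fun x => by
    simp only [hN, mul_assoc, hϖm, mul_div_assoc]
    rw [Real.mul_iSup_of_nonneg (h0 ϖ)]
  have hNmul : ∀ x y, N (x * y) ≤ ν x * N y := fun x y => hNub _ _ fun j => by
    rw [mul_assoc, mul_assoc]
    exact (hmul _ _).trans (mul_le_mul_of_nonneg_left (hNle' y j) (h0 x))
  have hNm : ∀ i y, N (m i * y) ≤ w i * N y := fun i y => hNub _ _ fun j => by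
    calc ν (m i * y * m j) = ν (y * m (i * j)) := by rw [map_mul]; congr 1; ring
      _ ≤ N y * w (i * j) := hNle' _ _
      _ ≤ N y * (w i * w j) := by gcongr; exacts [hN0 y, hwm i j]
      _ = _ := by ring
  -- The operator norm on `(R, N)`; at `y = 0` the quotient is the harmless `0 / 0 = 0`.
  set ν' : R → ℝ := fun x => ⨆ y, N (x * y) / N y with hν'
  have hub : ∀ x c, 0 ≤ c → (∀ y, N (x * y) ≤ c * N y) → ν' x ≤ c := fun x c hc h =>
    ciSup_le fun y => div_le_of_le_mul₀ (hN0 y) hc (h y)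
  have hle : ∀ x y, N (x * y) ≤ ν' x * N y := fun x y => by
    rcases eq_or_ne y 0 with rfl | hy
    · simp [hNz]
    rw [← div_le_iff₀ (hNpos y hy)]
    refine le_ciSup (f := fun y => N (x * y) / N y) ⟨ν x, ?_⟩ y
    rintro _ ⟨y, rfl⟩
    exact div_le_of_le_mul₀ (hN0 y) (h0 x) (hNmul x y)
  have hν'0 : ∀ x, 0 ≤ ν' x := fun x => Real.iSup_nonneg fun y => div_nonneg (hN0 _) (hN0 _)
  have hν'ν : ∀ x, ν' x ≤ ν x := fun x => hub x _ (h0 x) (hNmul x)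
  have hνC : ∀ x, ν x ≤ C * ν' x := fun x => by
    have h2 : N 1 ≤ C := by simpa [h1] using hNC 1
    calc ν x ≤ N (x * 1) := by simpa using hνN x
      _ ≤ ν' x * N 1 := hle x 1
      _ ≤ ν' x * C := by gcongr; exact hν'0 x
      _ = _ := mul_comm _ _
  have hone : ν' 1 = 1 := by
    refine le_antisymm ((hν'ν 1).trans h1.le) ?_
    have hN1 : 0 < N 1 := lt_of_lt_of_le (by rw [h1]; exact one_pos) (hνN 1)
    have := hle 1 1
    rw [mul_one] at this
    exact (le_mul_iff_one_le_left hN1).1 this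
  have hν'ϖ : ∀ x, ν' (ϖ * x) = ν ϖ * ν' x := fun x => by
    apply le_antisymm
    · refine hub _ _ (mul_nonneg (h0 _) (hν'0 _)) fun y => ?_
      rw [mul_assoc, hNϖ, mul_assoc]
      exact mul_le_mul_of_nonneg_left (hle x y) (h0 _)
    · rw [← le_div_iff₀' hϖ0]
      refine hub _ _ (div_nonneg (hν'0 _) (h0 _)) fun y => ?_
      rw [div_mul_eq_mul_div, le_div_iff₀' hϖ0, ← hNϖ, ← mul_assoc]
      exact hle _ _
  have hϖ' : ν' ϖ = ν ϖ := by simpa [hone] using hν'ϖ 1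
  refine ⟨ν', ⟨⟨hν'0, ?_, hone, ?_, ?_, ?_⟩, ⟨hu, ?_, ?_⟩, hν'ν, C, hC0, hνC⟩, ?_⟩
  · exact le_antisymm ((hν'ν 0).trans hz.le) (hν'0 0)
  · intro x hx
    refine hd x (le_antisymm ?_ (h0 x))
    simpa [hx] using hνC x
  · intro x y
    refine hub _ _ ((hν'0 x).trans (le_max_left _ _)) fun z => ?_
    rw [add_mul, max_mul_of_nonneg _ _ (hN0 z)]
    exact (hNadd _ _).trans (max_le_max (hle x z) (hle y z))
  · intro x y
    refine hub _ _ (mul_nonneg (hν'0 x) (hν'0 y)) fun z => ?_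
    rw [mul_assoc, mul_assoc]
    exact (hle x _).trans (mul_le_mul_of_nonneg_left (hle y z) (hν'0 x))
  · rwa [hϖ']
  · intro x
    rw [hν'ϖ, hϖ']
  · intro j
    exact hub _ _ (hw j).le (hNm j)

/-- An element with a power of norm less than `1` has norm less than `1` in some equivalent norm. -/
lemma exists_refinement_of_pow {R : Type*} [CommRing R] {ν : R → ℝ} (hν : IsRingNorm ν)
    {ϖ : R} (hϖ : IsMultPseudoUniformizer ν ϖ) (x : R) (n : ℕ) (hx : ν (x ^ n) < 1) :
    ∃ ν' : R → ℝ, Refines ϖ ν ν' ∧ ν' x < 1 := by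
  have ⟨h0, hz, h1, hd, hadd, hmul⟩ := hν
  have hn : n ≠ 0 := by
    rintro rfl
    simp [h1] at hx
  obtain ⟨r, hr0, hr1, hr⟩ : ∃ r : ℝ, 0 < r ∧ r < 1 ∧ ν (x ^ n) ≤ r ^ n := by
    have hM : (0 : ℝ) < max (ν (x ^ n)) (1 / 2) := lt_max_of_lt_right (by norm_num)
    refine ⟨max (ν (x ^ n)) (1 / 2) ^ ((n : ℝ)⁻¹), Real.rpow_pos_of_pos hM _,
      Real.rpow_lt_one hM.le (max_lt hx (by norm_num)) (by positivity), ?_⟩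
    rw [Real.rpow_inv_natCast_pow hM.le hn]
    exact le_max_left _ _
  have hbd : ∀ k, ν (x ^ k) ≤ (∑ i ∈ Finset.range n, ν (x ^ i) / r ^ i) * r ^ k := by
    intro k
    induction k using Nat.strong_induction_on with
    | _ k ih =>
      rcases lt_or_ge k n with hk | hk
      · rw [← div_le_iff₀ (by positivity)]
        exact Finset.single_le_sum (f := fun i => ν (x ^ i) / r ^ i)
          (fun i _ => div_nonneg (h0 _) (by positivity)) (Finset.mem_range.2 hk)
      · obtain ⟨l, rfl⟩ := Nat.exists_eq_add_of_le hk
        rw [pow_add, pow_add]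
        calc _ ≤ ν (x ^ n) * ν (x ^ l) := hmul _ _
          _ ≤ r ^ n * ((∑ i ∈ Finset.range n, ν (x ^ i) / r ^ i) * r ^ l) := by
            gcongr
            · exact h0 _
            · exact ih l (by omega)
          _ = _ := by ring
  obtain ⟨ν', h, h'⟩ := exists_refinement hν hϖ (powersHom R x)
    (fun j => r ^ j.toAdd) (fun j => by positivity) (by simp)
    (fun i j => by simp [pow_add]) _ (fun j => by simpa using hbd j.toAdd)
  exact ⟨ν', h, lt_of_le_of_lt (by simpa using h' (Multiplicative.ofAdd 1)) hr1⟩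

lemma exists_refinement_of_finset {R : Type*} [CommRing R] {ν : R → ℝ} (hν : IsRingNorm ν)
    {ϖ : R} (hϖ : IsMultPseudoUniformizer ν ϖ) {X : Type*} (f : X → R) (S : Finset X)
    (hS : ∀ x ∈ S, ∃ n, ν (f x ^ n) < 1) :
    ∃ ν' : R → ℝ, Refines ϖ ν ν' ∧ ∀ x ∈ S, ν' (f x) < 1 := by
  classical
  induction S using Finset.induction_on with
  | empty => exact ⟨ν, ⟨hν, hϖ, fun _ => le_rfl, 1, one_pos, fun _ => by simp⟩, by simp⟩
  | insert a S ha ih =>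
    obtain ⟨ν₁, hν₁, h₁⟩ := ih fun x hx => hS x (Finset.mem_insert_of_mem hx)
    obtain ⟨n, hn⟩ := hS a (Finset.mem_insert_self _ _)
    obtain ⟨ν₂, hν₂, h₂⟩ :=
      exists_refinement_of_pow hν₁.1 hν₁.2.1 (f a) n ((hν₁.2.2.1 _).trans_lt hn)
    refine ⟨ν₂, hν₁.trans hν₂, fun x hx => ?_⟩
    rcases Finset.mem_insert.1 hx with rfl | hx
    · exact h₂
    · exact (hν₂.2.2.1 _).trans_lt (h₁ x hx)

/-- A map to a finite type has a finite set of representatives of its fibres. -/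
lemma exists_finset_reps {X F : Type*} [Finite F] (f : X → F) :
    ∃ S : Finset X, ∀ t, ∃ s ∈ S, f s = f t := by
  classical
  have := Fintype.ofFinite (Set.range f)
  refine ⟨Finset.univ.image (Set.rangeSplitting f), fun t => ?_⟩
  exact ⟨_, Finset.mem_image_of_mem _ (Finset.mem_univ ⟨f t, t, rfl⟩),
    Set.apply_rangeSplitting f _⟩

lemma IsRingNorm.natCast_le_one {R : Type*} [CommRing R] {ν : R → ℝ} (hν : IsRingNorm ν)
    (n : ℕ) : ν n ≤ 1 := by
  obtain ⟨h0, hz, h1, hd, hadd, hmul⟩ := hν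
  induction n with
  | zero => simp [hz]
  | succ n ih =>
    push_cast
    exact (hadd _ _).trans (max_le ih h1.le)

/-- The unit ball of `ν`; as `ν` need not be symmetric, it is a subring only when `-1` lies in
it. -/
def unitBall {R : Type*} [CommRing R] {ν : R → ℝ} (hν : IsRingNorm ν) (hneg : ν (-1) ≤ 1) :
    Subring R where
  carrier := {x | ν x ≤ 1}
  mul_mem' {a b} ha hb := (hν.2.2.2.2.2 a b).trans (mul_le_one₀ ha (hν.1 b) hb)
  one_mem' := hν.2.2.1.le
  add_mem' {a b} ha hb := (hν.2.2.2.2.1 a b).trans (max_le ha hb)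
  zero_mem' := by simp [hν.2.1]
  neg_mem' {a} ha := by
    rw [neg_eq_neg_one_mul]
    exact (hν.2.2.2.2.2 _ a).trans (mul_le_one₀ hneg (hν.1 a) ha)

/-- If `x ^ p ^ n` is close to `1` and `p` is small, then `(x - 1) ^ p ^ n` is small, since it is
congruent to `x ^ p ^ n - 1` modulo `p` in the unit ball. -/
lemma sub_one_pow_lt_one {R : Type*} [CommRing R] {ν : R → ℝ} (hν : IsRingNorm ν)
    (hneg : ν (-1) ≤ 1) (p : ℕ) [Fact p.Prime] (hp : ν (p : R) < 1) (x : R) (hx : ν x ≤ 1)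
    (n : ℕ) (hxn : ν (x ^ p ^ n - 1) < 1) : ν ((x - 1) ^ p ^ n) < 1 := by
  let A := unitBall hν hneg
  let a : A := ⟨x, hx⟩
  obtain ⟨y, hy⟩ : ∃ y : A, (a - 1) ^ p ^ n = (a ^ p ^ n - 1) + (p : A) * y := by
    obtain ⟨r, hr⟩ := exists_add_pow_prime_pow_eq (Fact.out : p.Prime) (a - 1) 1 n
    rw [sub_add_cancel, one_pow] at hr
    exact ⟨-((a - 1) * r), by rw [hr]; ring⟩
  have key : (x - 1) ^ p ^ n = (x ^ p ^ n - 1) + (p : R) * (y : R) := by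
    simpa [a] using congrArg Subtype.val hy
  rw [key]
  refine (hν.2.2.2.2.1 _ _).trans_lt (max_lt hxn ((hν.2.2.2.2.2 _ _).trans_lt ?_))
  have h1 : ν (y : R) ≤ 1 := y.2
  calc ν (p : R) * ν (y : R) ≤ ν (p : R) * 1 := by gcongr; exact hν.1 _
    _ < 1 := by simpa using hp

/-- **Statement 14** (existence of a norm adapted to a weight). Let `R` be a Noetherian
Banach–Tate ring with norm `ν`, multiplicative pseudo-uniformizer `ϖ`, and a continuous
ring homomorphism `ι : ℤ_p → R`.  Set `ε = 1` if `p` is odd and `ε = 2` if `p = 2`, fix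
`d ≥ 1`, and let `κ : (ℤ_p^×)^d → R^×` be a continuous group homomorphism.  Then there
exist `s > 0`, constants `C₁, C₂ > 0` and a norm `ν'` on `R` with:
(i) `C₁ * ν x ^ s ≤ ν' x ≤ C₂ * ν x ^ s`;
(ii) `ν' (ι z) ≤ ‖z‖_p` for all `z : ℤ_p`;
(iii) `ν' (κ t) ≤ 1` for all `t`;
(iv) `ν' (κ t − 1) < 1` for `t ∈ (1 + p^ε ℤ_p)^d`;
(v) `ϖ` is a multiplicative pseudo-uniformizer for `ν'`. -/
theorem exists_adapted_norm (p : ℕ) [Fact p.Prime]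
    {R : Type*} [CommRing R] [IsNoetherianRing R]
    (ν : R → ℝ) (hν : IsRingNorm ν) (hcomp : NormComplete ν)
    (ϖ : R) (hϖ : IsMultPseudoUniformizer ν ϖ)
    (ι : ℤ_[p] →+* R)
    (hι : ∀ ε : ℝ, 0 < ε → ∃ δ : ℝ, 0 < δ ∧ ∀ z : ℤ_[p], ‖z‖ < δ → ν (ι z) < ε)
    (d : ℕ) (hd : 1 ≤ d)
    (κ : (Fin d → ℤ_[p]ˣ) →* Rˣ)
    (hκcont : ∀ t₀ : Fin d → ℤ_[p]ˣ, ∀ ε : ℝ, 0 < ε → ∃ δ : ℝ, 0 < δ ∧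
      ∀ t : Fin d → ℤ_[p]ˣ, (∀ i, ‖((t i : ℤ_[p]) - (t₀ i : ℤ_[p]))‖ < δ) →
        ν ((κ t : R) - (κ t₀ : R)) < ε) :
    ∃ (s C₁ C₂ : ℝ) (ν' : R → ℝ), 0 < s ∧ 0 < C₁ ∧ 0 < C₂ ∧
      IsRingNorm ν' ∧
      (∀ x : R, C₁ * (ν x) ^ s ≤ ν' x ∧ ν' x ≤ C₂ * (ν x) ^ s) ∧
      (∀ z : ℤ_[p], ν' (ι z) ≤ ‖z‖) ∧
      (∀ t : Fin d → ℤ_[p]ˣ, ν' (κ t : R) ≤ 1) ∧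
      (∀ t : Fin d → ℤ_[p]ˣ,
        (∀ i, ((p : ℤ_[p]) ^ (if p = 2 then 2 else 1)) ∣ ((t i : ℤ_[p]) - 1)) →
        ν' ((κ t : R) - 1) < 1) ∧
      IsMultPseudoUniformizer ν' ϖ := by
  have hp : p.Prime := Fact.out
  have ⟨h0, hz, h1, hdef, hadd, hmul⟩ := hν
  have hsmall : ∀ δ : ℝ, 0 < δ → ∃ k : ℕ, ∀ z : ℤ_[p], (p : ℤ_[p]) ^ k ∣ z → ‖z‖ < δ := by
    intro δ hδ
    obtain ⟨k, hk⟩ := PadicInt.exists_pow_neg_lt p hδ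
    refine ⟨k, fun z hz => lt_of_le_of_lt ?_ hk⟩
    exact (PadicInt.norm_le_pow_iff_mem_span_pow z k).2 (Ideal.mem_span_singleton.2 hz)
  -- `ℕ` is dense in `ℤ_p`, so `ι` lands in the unit ball.
  obtain ⟨k₀, hk₀⟩ : ∃ k : ℕ, ∀ z : ℤ_[p], (p : ℤ_[p]) ^ k ∣ z → ν (ι z) < 1 := by
    obtain ⟨δ, hδ, h⟩ := hι 1 one_pos
    obtain ⟨k, hk⟩ := hsmall δ hδ
    exact ⟨k, fun z hz => h z (hk z hz)⟩
  have hιle : ∀ z, ν (ι z) ≤ 1 := by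
    intro z
    have hmem := PadicInt.appr_spec k₀ z
    have heq : ι z = (z.appr k₀ : R) + ι (z - z.appr k₀) := by simp
    rw [heq]
    exact (hadd _ _).trans (max_le (hν.natCast_le_one _)
      (hk₀ _ (Ideal.mem_span_singleton.1 hmem)).le)
  have hneg : ν (-1) ≤ 1 := by simpa using hιle (-1)
  obtain ⟨k, hk⟩ : ∃ k : ℕ, ∀ t : Fin d → ℤ_[p]ˣ,
      (∀ i, (p : ℤ_[p]) ^ k ∣ (t i : ℤ_[p]) - 1) → ν ((κ t : R) - 1) < 1 := by
    obtain ⟨δ, hδ, h⟩ := hκcont 1 1 one_pos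
    obtain ⟨k, hk⟩ := hsmall δ hδ
    refine ⟨k, fun t ht => ?_⟩
    simpa using h t fun i => by simpa using hk _ (ht i)
  let f : (Fin d → ℤ_[p]ˣ) → (Fin d → ZMod (p ^ k)) :=
    fun t i => PadicInt.toZModPow k (t i : ℤ_[p])
  have : NeZero (p ^ k) := ⟨pow_ne_zero _ hp.ne_zero⟩
  have hf : ∀ s t, f s = f t → ν ((κ (t * s⁻¹) : R) - 1) < 1 := by
    intro s t hst
    refine hk _ fun i => ?_
    have h2 : (p : ℤ_[p]) ^ k ∣ (t i : ℤ_[p]) - s i := by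
      rw [← Ideal.mem_span_singleton, ← PadicInt.ker_toZModPow, RingHom.mem_ker, map_sub,
        sub_eq_zero]
      exact (congrFun hst i).symm
    have h3 : (((t * s⁻¹) i : ℤ_[p]ˣ) : ℤ_[p]) - 1
        = ((t i : ℤ_[p]) - s i) * ((s i)⁻¹ : ℤ_[p]ˣ) := by
      simp [sub_mul]
    rw [h3]
    exact h2.mul_right _
  have hts : ∀ s t : Fin d → ℤ_[p]ˣ, (κ t : R) = κ (t * s⁻¹) * κ s := by
    intro s t
    rw [← Units.val_mul, ← map_mul, inv_mul_cancel_right]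
  obtain ⟨C, hC⟩ : ∃ C : ℝ, ∀ t, ν (κ t : R) ≤ C := by
    obtain ⟨S, hS⟩ := exists_finset_reps f
    refine ⟨∑ s ∈ S, ν (κ s : R), fun t => ?_⟩
    obtain ⟨s, hs, hst⟩ := hS t
    have h4 : ν (κ (t * s⁻¹) : R) ≤ 1 := by
      rw [← sub_add_cancel (κ (t * s⁻¹) : R) 1]
      exact (hadd _ _).trans (max_le (hf s t hst).le h1.le)
    rw [hts s t]
    calc _ ≤ ν (κ (t * s⁻¹) : R) * ν (κ s : R) := hmul _ _
      _ ≤ 1 * ν (κ s : R) := by gcongr; exact h0 _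
      _ = ν (κ s : R) := one_mul _
      _ ≤ _ := Finset.single_le_sum (f := fun s => ν (κ s : R)) (fun s _ => h0 _) hs
  obtain ⟨ν₁, hν₁, hκ₁⟩ := exists_refinement hν hϖ ((Units.coeHom R).comp κ) (fun _ => 1)
    (fun _ => one_pos) rfl (fun _ _ => by simp) C (fun t => by simpa using hC t)
  obtain ⟨ν₂, hν₂', hp₂⟩ := exists_refinement_of_pow hν₁.1 hν₁.2.1 (p : R) k₀
    ((hν₁.2.2.1 _).trans_lt (by simpa using hk₀ _ dvd_rfl))
  have hκ₂ : ∀ t, ν₂ (κ t : R) ≤ 1 := fun t => (hν₂'.2.2.1 _).trans (hκ₁ t)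
  have hν₂ := hν₁.trans hν₂'
  let H := {t : Fin d → ℤ_[p]ˣ // ∀ i, (p : ℤ_[p]) ∣ (t i : ℤ_[p]) - 1}
  obtain ⟨S, hS⟩ := exists_finset_reps (fun t : H => f t.1)
  obtain ⟨ν₃, hν₃', hS₃⟩ := exists_refinement_of_finset hν₂.1 hν₂.2.1
    (fun t : H => (κ t.1 : R) - 1) S (by
      intro t _
      refine ⟨p ^ k, sub_one_pow_lt_one hν₂.1 ((hν₂.2.2.1 _).trans hneg) p hp₂ _ (hκ₂ _) k ?_⟩
      refine (hν₂.2.2.1 _).trans_lt ?_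
      have := hk (t.1 ^ p ^ k) fun i => by
        have h5 := dvd_sub_pow_of_dvd_sub (t.2 i) k
        rw [one_pow] at h5
        simpa using (pow_dvd_pow _ k.le_succ).trans h5
      simpa using this)
  have hν₃ := hν₂.trans hν₃'
  have hp₃ : ν₃ (p : R) < 1 := (hν₃'.2.2.1 _).trans_lt hp₂
  have hκ₃ : ∀ t, ν₃ (κ t : R) ≤ 1 := fun t => (hν₃'.2.2.1 _).trans (hκ₂ t)
  have hH₃ : ∀ t : H, ν₃ ((κ t.1 : R) - 1) < 1 := by
    intro t
    obtain ⟨s, hs, hst⟩ := hS t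
    have heq : (κ t.1 : R) - 1 = (κ (t.1 * s.1⁻¹) - 1) * κ s.1 + (κ s.1 - 1) := by
      rw [hts s.1 t.1]; ring
    rw [heq]
    refine (hν₃.1.2.2.2.2.1 _ _).trans_lt (max_lt ?_ (hS₃ s hs))
    refine (hν₃.1.2.2.2.2.2 _ _).trans_lt ?_
    exact mul_lt_one_of_nonneg_of_lt_one_left (hν₃.1.1 _)
      ((hν₃.2.2.1 _).trans_lt (hf _ _ hst)) (hκ₃ _)
  obtain ⟨⟨g0, gz, g1, gd, gadd, gmul⟩, ⟨gu, glt, gϖ⟩, gle, D, hD, hgD⟩ := hν₃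
  obtain ⟨n, hn⟩ := exists_pow_lt_of_lt_one (show (0 : ℝ) < (p : ℝ)⁻¹ by
    have := hp.pos; positivity) hp₃
  have hs : n + 1 ≠ 0 := n.succ_ne_zero
  refine ⟨(n + 1 : ℕ), (D ^ (n + 1))⁻¹, 1, fun x => ν₃ x ^ (n + 1), by positivity, by positivity,
    one_pos, ⟨fun x => pow_nonneg (g0 x) _, by simp [gz], by simp [g1],
      fun x hx => gd x (pow_eq_zero_iff hs |>.1 hx), ?_, ?_⟩, ?_, ?_, ?_, ?_, gu, ?_, ?_⟩
  · intro x y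
    rcases le_max_iff.1 (gadd x y) with h | h
    · exact le_max_of_le_left (pow_le_pow_left₀ (g0 _) h _)
    · exact le_max_of_le_right (pow_le_pow_left₀ (g0 _) h _)
  · intro x y
    rw [← mul_pow]
    exact pow_le_pow_left₀ (g0 _) (gmul x y) _
  · intro x
    rw [Real.rpow_natCast, one_mul, inv_mul_le_iff₀ (by positivity), ← mul_pow]
    exact ⟨pow_le_pow_left₀ (h0 _) (hgD x) _, pow_le_pow_left₀ (g0 _) (gle x) _⟩
  · intro z
    rcases eq_or_ne z 0 with rfl | hz0
    · simp [gz]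
    have hp' : ν₃ (p : R) ^ (n + 1) ≤ (p : ℝ)⁻¹ := by
      rw [pow_succ]
      exact (mul_le_of_le_one_right (pow_nonneg (g0 _) _) hp₃.le).trans hn.le
    have hpow : ∀ j, ν₃ ((p : R) ^ j) ≤ ν₃ (p : R) ^ j := by
      intro j
      induction j with
      | zero => simp [g1]
      | succ j ih =>
        rw [pow_succ, pow_succ]
        exact (gmul _ _).trans (mul_le_mul_of_nonneg_right ih (g0 _))
    have hle : ν₃ (ι z) ≤ ν₃ (p : R) ^ z.valuation := by
      conv_lhs => rw [PadicInt.unitCoeff_spec hz0]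
      rw [map_mul, map_pow, map_natCast]
      calc _ ≤ _ := gmul _ _
        _ ≤ 1 * ν₃ (p : R) ^ z.valuation := by
          gcongr
          · exact g0 _
          · exact (gle _).trans (hιle _)
          · exact hpow _
        _ = _ := one_mul _
    rw [PadicInt.norm_eq_zpow_neg_valuation hz0, zpow_neg, zpow_natCast, ← inv_pow]
    calc ν₃ (ι z) ^ (n + 1) ≤ (ν₃ (p : R) ^ z.valuation) ^ (n + 1) :=
          pow_le_pow_left₀ (g0 _) hle _
      _ = (ν₃ (p : R) ^ (n + 1)) ^ z.valuation := by rw [← pow_mul, ← pow_mul, mul_comm]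
      _ ≤ _ := pow_le_pow_left₀ (pow_nonneg (g0 _) _) hp' _
  · exact fun t => pow_le_one₀ (g0 _) (hκ₃ t)
  · intro t ht
    refine pow_lt_one₀ (g0 _) (hH₃ ⟨t, fun i => (dvd_pow_self _ ?_).trans (ht i)⟩) hs
    split_ifs <;> norm_num
  · exact pow_lt_one₀ (g0 _) glt hs
  · intro x
    change ν₃ (ϖ * x) ^ (n + 1) = _
    rw [gϖ, mul_pow]
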